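/- Let L be an ideal lattice. The assignments a ↦ D(a) and Y ↦ sup{b ∈ L : b compact and D(b) ⊆ Y} induce mutually inverse, order-preserving bijections between the set of semi-prime elements of L and the set of open subsets of Spec L. Precisely: for every semi-prime a ∈ L, sup{b compact : D(b) ⊆ D(a)} = a; and for every open subset Y ⊆ Spec L, the element a = sup{b compact : D(b) ⊆ Y} is semi-prime and satisfies D(a) = Y. -/

import Mathlib

open CompleteLattice TopologicalSpace

/-- An ideal lattice: a complete, compactly generated lattice with an associative
multiplication distributing over finite suprema, for which `⊤` is a compact
two-sided identity and products of compact elements are compact. -/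
structure IsIdealLattice (α : Type*) [CompleteLattice α] [Mul α] : Prop where
  mul_assoc : ∀ a b c : α, a * b * c = a * (b * c)
  compactlyGenerated : ∀ a : α, a = sSup {b : α | b ≤ a ∧ IsCompactElement b}
  mul_sup : ∀ a b c : α, a * (b ⊔ c) = a * b ⊔ a * c
  sup_mul : ∀ a b c : α, (a ⊔ b) * c = a * c ⊔ b * c
  top_compact : IsCompactElement (⊤ : α)
  top_mul : ∀ a : α, ⊤ * a = a
  mul_top : ∀ a : α, a * ⊤ = a
  compact_mul : ∀ a b : α, IsCompactElement a → IsCompactElement b → IsCompactElement (a * b)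

/-- A prime element of an ideal lattice: `p ≠ ⊤` and `a * b ≤ p` implies `a ≤ p` or `b ≤ p`. -/
def IsPrimeElt {α : Type*} [CompleteLattice α] [Mul α] (p : α) : Prop :=
  p ≠ ⊤ ∧ ∀ a b : α, a * b ≤ p → a ≤ p ∨ b ≤ p

/-- A semi-prime element of an ideal lattice: `b * b ≤ a` implies `b ≤ a`. -/
def IsSemiprimeElt {α : Type*} [CompleteLattice α] [Mul α] (a : α) : Prop :=
  ∀ b : α, b * b ≤ a → b ≤ a

/-- The prime spectrum of an ideal lattice: the set of prime elements. -/
def SpecL (α : Type*) [CompleteLattice α] [Mul α] : Type _ := {p : α // IsPrimeElt p}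

/-- The Zariski-closed set `V(a) = {p ∈ Spec L : a ≤ p}`. -/
def zV {α : Type*} [CompleteLattice α] [Mul α] (a : α) : Set (SpecL α) := {p | a ≤ p.1}

/-- The Zariski-open set `D(a) = {p ∈ Spec L : a ≰ p}`. -/
def zD {α : Type*} [CompleteLattice α] [Mul α] (a : α) : Set (SpecL α) := {p | ¬ a ≤ p.1}

/-- The Zariski topology on `SpecL α`: the open sets are exactly the sets `zD a`. -/
instance {α : Type*} [CompleteLattice α] [Mul α] : TopologicalSpace (SpecL α) :=
  TopologicalSpace.generateFrom {U : Set (SpecL α) | ∃ a : α, U = zD a}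

/-!
The map `D` is the lower adjoint of `Y ↦ sup {b compact : D(b) ⊆ Y}`, because every element is a
supremum of compact ones. Its range is the whole topology, since `D` turns products into
intersections and suprema into unions, so `D` inverts its upper adjoint on open sets. The upper
adjoint takes semi-prime values, because `D(x * x) = D(x)`. What remains is that a semi-prime `a` is
determined by `D(a)`, which is Krull's separation argument: if `b` is compact and `b ≰ a`, then the
iterated squares `b, b², (b²)², …` are compact and not below `a`, and an element maximal among those
above `a` and above none of these squares is prime.
-/

/-- A multiplicative lattice: a lattice with a multiplication that lies below the meet and
distributes over binary joins. The product need not be associative: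
the ideals of a Lie algebra under the bracket are an example. -/
class IsMultiplicativeLattice (α : Type*) [Lattice α] [Mul α] : Prop where
  mul_le_inf : ∀ a b : α, a * b ≤ a ⊓ b
  mul_sup : ∀ a b c : α, a * (b ⊔ c) = a * b ⊔ a * c
  sup_mul : ∀ a b c : α, (a ⊔ b) * c = a * c ⊔ b * c

namespace IsMultiplicativeLattice

variable {α : Type*} [Lattice α] [Mul α] [IsMultiplicativeLattice α]

theorem mul_le_left (a b : α) : a * b ≤ a :=
  (mul_le_inf a b).trans inf_le_left

theorem mul_le_right (a b : α) : a * b ≤ b :=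
  (mul_le_inf a b).trans inf_le_right

instance : MulLeftMono α where
  elim a _ _ h := sup_eq_right.1 <| by rw [← mul_sup, sup_eq_right.2 h]

instance : MulRightMono α where
  elim c _ _ h := sup_eq_right.1 <| by
    simp only [Function.swap]
    rw [← sup_mul, sup_eq_right.2 h]

theorem sup_mul_sup_le (p a b : α) : (p ⊔ a) * (p ⊔ b) ≤ p ⊔ a * b := by
  rw [sup_mul, mul_sup a]
  exact sup_le (le_sup_of_le_left (mul_le_left _ _)) (sup_le_sup_right (mul_le_right _ _) _)

end IsMultiplicativeLattice

open IsMultiplicativeLattice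

section Krull

variable {α : Type*}

/-- An m-system, the noncommutative substitute for a multiplicatively closed set: the product of
any two members lies above a member. -/
def IsMSystem [LE α] [Mul α] (S : Set α) : Prop :=
  ∀ s ∈ S, ∀ t ∈ S, ∃ u ∈ S, u ≤ s * t

theorem exists_le_maximal_notMem_upperClosure [CompleteLattice α] {S : Set α}
    (hS : ∀ s ∈ S, IsCompactElement s) {a : α} (ha : a ∉ upperClosure S) :
    ∃ p, a ≤ p ∧ Maximal (· ∉ upperClosure S) p := by
  refine zorn_le_nonempty₀ {x | x ∉ upperClosure S} (fun C hC hchain y hy => ?_) a ha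
  refine ⟨sSup C, ?_, fun _ hz => le_sSup hz⟩
  rintro ⟨s, hs, hsC⟩
  obtain ⟨x, hx, hsx⟩ := (isCompactElement_iff_le_of_directed_sSup_le α s).1 (hS s hs) C ⟨y, hy⟩
    hchain.directedOn hsC
  exact hC hx ⟨s, hs, hsx⟩

variable [CompleteLattice α] [Mul α]

theorem IsMSystem.isPrimeElt_of_maximal [IsMultiplicativeLattice α] {S : Set α} (hS : IsMSystem S)
    (hne : S.Nonempty) {p : α} (hp : Maximal (· ∉ upperClosure S) p) : IsPrimeElt p := by
  have exists_le_sup {x : α} (hx : ¬ x ≤ p) : ∃ s ∈ S, s ≤ p ⊔ x := by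
    by_contra h
    exact hx (le_sup_right.trans (hp.2 h le_sup_left))
  refine ⟨?_, fun a b hab => ?_⟩
  · rintro rfl
    exact hp.1 (hne.imp fun _ hs => ⟨hs, le_top⟩)
  · by_contra! h
    obtain ⟨s, hs, hsa⟩ := exists_le_sup h.1
    obtain ⟨t, ht, htb⟩ := exists_le_sup h.2
    obtain ⟨u, hu, hust⟩ := hS s hs t ht
    refine hp.1 ⟨u, hu, ?_⟩
    calc u ≤ s * t := hust
      _ ≤ (p ⊔ a) * (p ⊔ b) := mul_le_mul' hsa htb
      _ ≤ p ⊔ a * b := sup_mul_sup_le p a b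
      _ = p := sup_eq_left.2 hab

end Krull

section IteratedSquare

variable {α : Type*} [Mul α]

/-- The iterated squares `b, b * b, (b * b) * (b * b), …`, which replace the powers of `b`. -/
def iteratedSquare (b : α) (n : ℕ) : α :=
  (fun x => x * x)^[n] b

theorem iteratedSquare_succ (b : α) (n : ℕ) :
    iteratedSquare b (n + 1) = iteratedSquare b n * iteratedSquare b n :=
  Function.iterate_succ_apply' _ _ _

theorem isMSystem_range_iteratedSquare [Lattice α] [IsMultiplicativeLattice α] (b : α) :
    IsMSystem (Set.range (iteratedSquare b)) := by
  have anti : Antitone (iteratedSquare b) :=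
    antitone_nat_of_succ_le fun n => (iteratedSquare_succ b n).trans_le (mul_le_left _ _)
  rintro _ ⟨m, rfl⟩ _ ⟨n, rfl⟩
  refine ⟨_, ⟨max m n + 1, rfl⟩, ?_⟩
  rw [iteratedSquare_succ]
  exact mul_le_mul' (anti (le_max_left m n)) (anti (le_max_right m n))

theorem isCompactElement_iteratedSquare [PartialOrder α]
    (hsq : ∀ a : α, IsCompactElement a → IsCompactElement (a * a))
    {b : α} (hb : IsCompactElement b) (n : ℕ) : IsCompactElement (iteratedSquare b n) := by
  induction n with
  | zero => exact hb
  | succ n ih => exact iteratedSquare_succ b n ▸ hsq _ ih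

theorem IsSemiprimeElt.le_of_iteratedSquare_le [CompleteLattice α] {a b : α}
    (ha : IsSemiprimeElt a) {n : ℕ} (h : iteratedSquare b n ≤ a) : b ≤ a := by
  induction n with
  | zero => exact h
  | succ n ih => exact ih (ha _ (iteratedSquare_succ b n ▸ h))

end IteratedSquare

section Zariski

variable {α : Type*} [CompleteLattice α] [Mul α]

theorem IsSemiprimeElt.exists_isPrimeElt_ge_not_le [IsMultiplicativeLattice α]
    (hsq : ∀ a : α, IsCompactElement a → IsCompactElement (a * a))
    {a b : α} (ha : IsSemiprimeElt a) (hb : IsCompactElement b) (hba : ¬ b ≤ a) :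
    ∃ p, IsPrimeElt p ∧ a ≤ p ∧ ¬ b ≤ p := by
  have compact : ∀ s ∈ Set.range (iteratedSquare b), IsCompactElement s :=
    Set.forall_mem_range.2 (isCompactElement_iteratedSquare hsq hb)
  have not_le : a ∉ upperClosure (Set.range (iteratedSquare b)) := by
    rintro ⟨_, ⟨n, rfl⟩, hn⟩
    exact hba (ha.le_of_iteratedSquare_le hn)
  obtain ⟨p, hap, hp⟩ := exists_le_maximal_notMem_upperClosure compact not_le
  have prime := (isMSystem_range_iteratedSquare b).isPrimeElt_of_maximal (Set.range_nonempty _) hp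
  exact ⟨p, prime, hap, fun hbp => hp.1 ⟨b, ⟨0, rfl⟩, hbp⟩⟩

theorem zD_mono : Monotone (zD : α → Set (SpecL α)) :=
  fun _ _ hab _ hp hb => hp (hab.trans hb)

theorem zD_top : zD (⊤ : α) = Set.univ :=
  Set.eq_univ_of_forall fun p hp => p.2.1 (top_le_iff.1 hp)

theorem zD_sSup (S : Set α) : zD (sSup S) = ⋃ a ∈ S, zD a := by
  ext p
  simp [zD]

theorem zD_mul [IsMultiplicativeLattice α] (a b : α) : zD (a * b) = zD a ∩ zD b := by
  apply subset_antisymm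
  · exact Set.subset_inter (zD_mono (mul_le_left a b)) (zD_mono (mul_le_right a b))
  · exact fun p hp hab => (p.2.2 a b hab).elim hp.1 hp.2

theorem isOpen_zD (a : α) : IsOpen (zD a) :=
  isOpen_generateFrom_of_mem ⟨a, rfl⟩

theorem exists_zD_eq_of_isOpen [IsMultiplicativeLattice α] {Y : Set (SpecL α)} (hY : IsOpen Y) :
    ∃ a, zD a = Y := by
  induction hY with
  | basic _ h => exact h.imp fun _ => Eq.symm
  | univ => exact ⟨⊤, zD_top⟩
  | inter _ _ _ _ hU hV =>
    obtain ⟨a, rfl⟩ := hU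
    obtain ⟨b, rfl⟩ := hV
    exact ⟨a * b, zD_mul a b⟩
  | sUnion 𝒰 _ h𝒰 =>
    obtain ⟨A, rfl⟩ : ∃ A : Set α, zD '' A = 𝒰 := Set.subset_range_iff_exists_image_eq.1 h𝒰
    exact ⟨sSup A, by rw [zD_sSup, Set.sUnion_image]⟩

theorem IsSemiprimeElt.zD_subset_zD_iff [IsMultiplicativeLattice α] [IsCompactlyGenerated α]
    (hsq : ∀ a : α, IsCompactElement a → IsCompactElement (a * a))
    {a b : α} (ha : IsSemiprimeElt a) : zD b ⊆ zD a ↔ b ≤ a := by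
  refine ⟨fun h => le_iff_compact_le_imp.2 fun c hc hcb => ?_, fun h => zD_mono h⟩
  by_contra hca
  obtain ⟨p, hp, hap, hcp⟩ := ha.exists_isPrimeElt_ge_not_le hsq hc hca
  exact h (zD_mono hcb (show ⟨p, hp⟩ ∈ zD c from hcp)) hap

/-- The element `sup {b compact : D(b) ⊆ Y}` attached to a set `Y` of primes; it plays the role of
the vanishing ideal of the complement of `Y`. -/
def zI (Y : Set (SpecL α)) : α :=
  sSup {b : α | IsCompactElement b ∧ zD b ⊆ Y}

theorem gc_zD_zI [IsCompactlyGenerated α] : GaloisConnection (zD : α → Set (SpecL α)) zI := by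
  refine fun a Y => ⟨fun h => ?_, fun h => ?_⟩
  · exact le_iff_compact_le_imp.2 fun c hc hca => le_sSup ⟨hc, (zD_mono hca).trans h⟩
  · calc zD a ⊆ zD (zI Y) := zD_mono h
      _ = ⋃ b ∈ {b : α | IsCompactElement b ∧ zD b ⊆ Y}, zD b := zD_sSup _
      _ ⊆ Y := Set.iUnion₂_subset fun _ hb => hb.2

variable [IsMultiplicativeLattice α] [IsCompactlyGenerated α]

theorem isSemiprimeElt_zI (Y : Set (SpecL α)) : IsSemiprimeElt (zI Y) := by
  intro b hb
  rwa [← gc_zD_zI.le_iff_le, zD_mul, Set.inter_self, gc_zD_zI.le_iff_le] at hb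

theorem zD_zI_of_isOpen {Y : Set (SpecL α)} (hY : IsOpen Y) : zD (zI Y) = Y := by
  obtain ⟨a, rfl⟩ := exists_zD_eq_of_isOpen hY
  exact gc_zD_zI.l_u_l_eq_l a

theorem IsSemiprimeElt.zI_zD (hsq : ∀ a : α, IsCompactElement a → IsCompactElement (a * a))
    {a : α} (ha : IsSemiprimeElt a) : zI (zD a) = a :=
  le_antisymm ((ha.zD_subset_zD_iff hsq).1 (gc_zD_zI.l_u_le _)) (gc_zD_zI.le_u_l a)

end Zariski

theorem semiprime_open_bijection_general {α : Type*} [CompleteLattice α] [Mul α]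
    [IsMultiplicativeLattice α] [IsCompactlyGenerated α]
    (hsq : ∀ a : α, IsCompactElement a → IsCompactElement (a * a)) :
    (∀ a : α, IsOpen (zD a)) ∧
    Monotone (zD : α → Set (SpecL α)) ∧
    (∀ a : α, IsSemiprimeElt a →
      sSup {b : α | IsCompactElement b ∧ zD b ⊆ zD a} = a) ∧
    (∀ Y : Set (SpecL α), IsOpen Y →
      IsSemiprimeElt (sSup {b : α | IsCompactElement b ∧ zD b ⊆ Y}) ∧
      zD (sSup {b : α | IsCompactElement b ∧ zD b ⊆ Y}) = Y) :=
  ⟨isOpen_zD, zD_mono, fun _ ha => ha.zI_zD hsq,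
    fun Y hY => ⟨isSemiprimeElt_zI Y, zD_zI_of_isOpen hY⟩⟩

namespace IsIdealLattice

variable {α : Type*} [CompleteLattice α] [Mul α]

theorem isCompactlyGenerated (hL : IsIdealLattice α) : IsCompactlyGenerated α where
  exists_sSup_eq a := ⟨{b | b ≤ a ∧ IsCompactElement b}, fun _ hb => hb.2,
    (hL.compactlyGenerated a).symm⟩

theorem isMultiplicativeLattice (hL : IsIdealLattice α) : IsMultiplicativeLattice α where
  mul_sup := hL.mul_sup
  sup_mul := hL.sup_mul
  mul_le_inf a b := by
    have mul_le_left : a * b ≤ a * ⊤ := by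
      rw [← sup_top_eq b, hL.mul_sup]
      exact le_sup_left
    have mul_le_right : a * b ≤ ⊤ * b := by
      rw [← sup_top_eq a, hL.sup_mul]
      exact le_sup_left
    exact le_inf (mul_le_left.trans_eq (hL.mul_top a)) (mul_le_right.trans_eq (hL.top_mul b))

end IsIdealLattice

/-- The assignments `a ↦ D(a)` and `Y ↦ sup {b compact : D(b) ⊆ Y}` are mutually inverse
order-preserving bijections between semi-prime elements of `L` and open subsets of
`Spec L`. -/
theorem semiprime_open_bijection {α : Type*} [CompleteLattice α] [Mul α]
    (hL : IsIdealLattice α) :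
    (∀ a : α, IsOpen (zD a)) ∧
    (∀ a b : α, IsSemiprimeElt a → IsSemiprimeElt b → a ≤ b → zD a ⊆ zD b) ∧
    (∀ a : α, IsSemiprimeElt a →
      sSup {b : α | IsCompactElement b ∧ zD b ⊆ zD a} = a) ∧
    (∀ Y : Set (SpecL α), IsOpen Y →
      IsSemiprimeElt (sSup {b : α | IsCompactElement b ∧ zD b ⊆ Y}) ∧
      zD (sSup {b : α | IsCompactElement b ∧ zD b ⊆ Y}) = Y) := by
  have := hL.isMultiplicativeLattice
  have := hL.isCompactlyGenerated
  obtain ⟨isOpen, mono, zI_zD, zD_zI⟩ :=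
    semiprime_open_bijection_general fun a ha => hL.compact_mul a a ha ha
  exact ⟨isOpen, fun _ _ _ _ hab => mono hab, zI_zD, zD_zI⟩
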